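/- Let g ≥ 2 be an integer and K a field. For 1 ≤ i < j ≤ g let H_{ij} := {x ∈ K^g : x_i = x_j}, and let L(A) denote the set of all linear subspaces of K^g obtained as intersections of subfamilies of A = {H_{ij}}_{1≤i<j≤g} (with the empty intersection giving K^g itself). For W ∈ L(A), write r(W) := g − dim_K W and s(W) := #{(i,j) : 1 ≤ i < j ≤ g, W ⊆ H_{ij}}. Then min over all W ∈ L(A) with W ≠ K^g of the ratio r(W)/s(W) equals 2/g; that is, g·r(W) ≥ 2·s(W) for every such W, and equality holds for the diagonal W = {x ∈ K^g : x_1 = ⋯ = x_g}, which has r = g−1 and s = g(g−1)/2. -/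

import Mathlib

/-!
For a subspace `W` of `K^g` and an index `i`, let `c i` be the set of indices `j` for which
`x i = x j` holds on all of `W`. A vector of `W` is determined by its coordinates at `i` and outside
`c i`, so `dim W ≤ g - #(c i) + 1`. Counting the ordered pairs `(i, j)` with `j ∈ c i` (the diagonal
ones, and twice those with `i < j`) gives `2 s(W) + g = ∑ i, #(c i)`. Together these yield
`2 s(W) + g ≤ g (r(W) + 1)`, that is `2 s(W) ≤ g r(W)`, for every subspace `W`.

On the small diagonal every `c i` is the whole index set: the first estimate gives `dim W ≤ 1`, with
equality since `W` contains the all-ones vector, and the count gives `2 s(W) + g = g ^ 2`.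
-/

/-- The diagonal hyperplane `{x ∈ K^g : x i = x j}` of the braid arrangement,
as a linear subspace of `K^g`. -/
def braidHyperplane (K : Type*) [Field K] (g : ℕ) (i j : Fin g) :
    Submodule K (Fin g → K) :=
  LinearMap.ker ((LinearMap.proj i : (Fin g → K) →ₗ[K] K) - LinearMap.proj j)

/-- The number `s(W)` of hyperplanes of the braid arrangement containing `W`. -/
noncomputable def braidCount (K : Type*) [Field K] (g : ℕ)
    (W : Submodule K (Fin g → K)) : ℕ :=
  {p : Fin g × Fin g | p.1 < p.2 ∧ W ≤ braidHyperplane K g p.1 p.2}.ncard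

lemma le_braidHyperplane_iff {K : Type*} [Field K] {g : ℕ} {W : Submodule K (Fin g → K)}
    {i j : Fin g} : W ≤ braidHyperplane K g i j ↔ ∀ x ∈ W, x i = x j := by
  simp [SetLike.le_def, braidHyperplane, sub_eq_zero]

open Classical in
/-- The indices `j` whose coordinate agrees with the `i`-th one on all of `W`. -/
noncomputable def braidClass (K : Type*) [Field K] (g : ℕ) (W : Submodule K (Fin g → K))
    (i : Fin g) : Finset (Fin g) :=
  {j | W ≤ braidHyperplane K g i j}

lemma mem_braidClass {K : Type*} [Field K] {g : ℕ} {W : Submodule K (Fin g → K)}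
    {i j : Fin g} : j ∈ braidClass K g W i ↔ ∀ x ∈ W, x i = x j := by
  simp [braidClass, le_braidHyperplane_iff]

/-- Restricting the vectors of `W` to `i` and the indices outside the class of `i` loses nothing. -/
lemma finrank_add_card_braidClass_le {K : Type*} [Field K] {g : ℕ}
    (W : Submodule K (Fin g → K)) (i : Fin g) :
    Module.finrank K W + (braidClass K g W i).card ≤ g + 1 := by
  set T : Finset (Fin g) := insert i (braidClass K g W i)ᶜ with hT
  have hinj : Function.Injective
      ((LinearMap.funLeft K K (fun t : T => (t : Fin g))).comp W.subtype) := by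
    rw [← LinearMap.ker_eq_bot, LinearMap.ker_eq_bot']
    rintro ⟨x, hx⟩ h
    have hz : ∀ j ∈ T, x j = 0 := fun j hj => congrFun h ⟨j, hj⟩
    ext j
    by_cases hj : j ∈ braidClass K g W i
    · exact (mem_braidClass.1 hj x hx).symm.trans (hz i (by simp [hT]))
    · exact hz j (by simp [hT, hj])
  have h1 := LinearMap.finrank_le_finrank_of_injective hinj
  have h2 : T.card ≤ (braidClass K g W i)ᶜ.card + 1 := Finset.card_insert_le _ _
  have h3 := Finset.card_add_card_compl (braidClass K g W i)
  simp only [Module.finrank_fintype_fun_eq_card, Fintype.card_coe, Fintype.card_fin] at h1 h3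
  omega

/-- Ordered pairs of indices agreeing on `W`, counted in two ways. -/
lemma two_mul_braidCount_add {K : Type*} [Field K] {g : ℕ} (W : Submodule K (Fin g → K)) :
    2 * braidCount K g W + g = ∑ i, (braidClass K g W i).card := by
  classical
  set R : Fin g → Fin g → Prop := fun i j => W ≤ braidHyperplane K g i j with hR
  have hsymm : ∀ i j, R i j → R j i := fun i j h =>
    le_braidHyperplane_iff.2 fun x hx => (le_braidHyperplane_iff.1 h x hx).symm
  have hrefl : ∀ i, R i i := fun i => le_braidHyperplane_iff.2 fun _ _ => rfl
  have hcount : braidCount K g W = ∑ i, ∑ j, if i < j ∧ R i j then 1 else 0 := by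
    rw [← Fintype.sum_prod_type' (f := fun i j => if i < j ∧ R i j then 1 else 0),
      ← Finset.card_filter, braidCount, ← Set.ncard_coe_finset]
    simp [hR]
  have hcount' : braidCount K g W = ∑ i, ∑ j, if j < i ∧ R i j then 1 else 0 := by
    rw [hcount, Finset.sum_comm]
    refine Finset.sum_congr rfl fun i _ => Finset.sum_congr rfl fun j _ => ?_
    exact if_congr (and_congr_right fun _ => ⟨hsymm _ _, hsymm _ _⟩) rfl rfl
  have hdiag : g = ∑ i : Fin g, ∑ j : Fin g, if i = j then 1 else 0 := by simp
  have hsum : ∑ i, (braidClass K g W i).card = ∑ i, ∑ j, if R i j then 1 else 0 := by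
    refine Finset.sum_congr rfl fun i _ => ?_
    rw [← Finset.card_filter]
    congr 1
  suffices h : (∑ i, ∑ j, if i < j ∧ R i j then 1 else 0) +
      (∑ i, ∑ j, if j < i ∧ R i j then 1 else 0) + (∑ i : Fin g, ∑ j : Fin g, if i = j then 1 else 0)
      = ∑ i, ∑ j, if R i j then 1 else 0 by
    omega
  simp only [← Finset.sum_add_distrib]
  refine Finset.sum_congr rfl fun i _ => Finset.sum_congr rfl fun j _ => ?_
  rcases lt_trichotomy i j with h | rfl | h
  · simp [h, h.not_gt, h.ne]
  · simp [hrefl]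
  · simp [h, h.not_gt, h.ne']

lemma two_mul_braidCount_le {K : Type*} [Field K] {g : ℕ} (W : Submodule K (Fin g → K)) :
    2 * braidCount K g W ≤ g * (g - Module.finrank K W) := by
  have hle : Module.finrank K W ≤ g := by simpa using W.finrank_le
  have h : ∑ i, (braidClass K g W i).card ≤ ∑ _i : Fin g, (g - Module.finrank K W + 1) :=
    Finset.sum_le_sum fun i _ => by
      have := finrank_add_card_braidClass_le W i
      omega
  rw [← two_mul_braidCount_add] at h
  simp only [Finset.sum_const, Finset.card_univ, Fintype.card_fin, smul_eq_mul, mul_add,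
    mul_one] at h
  omega

/-- Lemma 3.1 of the paper (via Mustață's formula): the minimum of `r(W)/s(W)` over
proper intersections `W` of braid-arrangement hyperplanes in `K^g` equals `2/g`;
i.e. `g · r(W) ≥ 2 · s(W)` for every such `W ≠ K^g`, with equality for the diagonal
`W = {x : x_1 = ⋯ = x_g}`, which has `r = g - 1` and `s = g (g - 1) / 2`. -/
theorem braid_lct_min (K : Type*) [Field K] (g : ℕ) (hg : 2 ≤ g) :
    (∀ S : Finset (Fin g × Fin g), (∀ p ∈ S, p.1 < p.2) →
        (⨅ p ∈ S, braidHyperplane K g p.1 p.2) ≠ ⊤ →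
        g * (g - Module.finrank K ↥(⨅ p ∈ S, braidHyperplane K g p.1 p.2))
          ≥ 2 * braidCount K g (⨅ p ∈ S, braidHyperplane K g p.1 p.2)) ∧
      (g - Module.finrank K
          ↥(⨅ p ∈ {p : Fin g × Fin g | p.1 < p.2}, braidHyperplane K g p.1 p.2)
         = g - 1 ∧
       braidCount K g (⨅ p ∈ {p : Fin g × Fin g | p.1 < p.2}, braidHyperplane K g p.1 p.2)
         = g * (g - 1) / 2) := by
  refine ⟨fun S _ _ => two_mul_braidCount_le _, ?_⟩
  set W : Submodule K (Fin g → K) :=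
    ⨅ p ∈ {p : Fin g × Fin g | p.1 < p.2}, braidHyperplane K g p.1 p.2 with hW
  have hlt : ∀ i j : Fin g, i < j → ∀ x ∈ W, x i = x j := fun i j hij =>
    le_braidHyperplane_iff.1 (iInf₂_le (i, j) hij)
  have hclass : ∀ i, braidClass K g W i = Finset.univ := fun i => by
    refine Finset.eq_univ_of_forall fun j => mem_braidClass.2 fun x hx => ?_
    rcases lt_trichotomy i j with h | rfl | h
    · exact hlt i j h x hx
    · rfl
    · exact (hlt j i h x hx).symm
  have hone : (1 : Fin g → K) ∈ W := by
    simp [hW, braidHyperplane]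
  have hpos : 0 < Module.finrank K W := by
    have : Nonempty (Fin g) := ⟨⟨0, by omega⟩⟩
    have : Nontrivial W := ⟨⟨1, hone⟩, 0, fun h => one_ne_zero (congrArg Subtype.val h)⟩
    exact Module.finrank_pos
  have hle := finrank_add_card_braidClass_le W ⟨0, by omega⟩
  have hcount := two_mul_braidCount_add W
  simp only [hclass, Finset.card_univ, Fintype.card_fin, Finset.sum_const, smul_eq_mul]
    at hle hcount
  refine ⟨by omega, ?_⟩
  rw [Nat.mul_sub_one]
  omega
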